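/- Let j', j'', j be integers and ell', ell'', ellcap, ell odd integers in [t]. Consider the family F of ordered pairs (A,B) of subsets of [t] with |A| = j' < t, |B| = j'' < t, |A intersect B| = j > 0, max{j',j''} < |A union B| < t, q(A - B) = ell', q(B - A) = ell'', q(A intersect B) = ellcap and q(A union B) = ell. Then: (i) the number of pairs (A,B) in F with {1,t} intersect A = {1,t} intersect B = {1} is Fr(gamma,theta;(ell+1)/2,(ell'-1)/2,(ell''-1)/2,(ellcap+1)/2) * c((ell+1)/2; t-(j'+j''-j)) * c((ell'-1)/2; j'-j) * c((ell''-1)/2; j''-j) * c((ellcap+1)/2; j); (ii) the number with {1,t} intersect A = {1} and {1,t} intersect B = {1,t} is Fr(gamma,beta;(ell-1)/2,(ell'-1)/2,(ell''+1)/2,(ellcap+1)/2) * c((ell-1)/2; t-(j'+j''-j)) * c((ell'-1)/2; j'-j) * c((ell''+1)/2; j''-j) * c((ellcap+1)/2; j); (iii) the number with {1,t} intersect A = {1} and {1,t} intersect B empty is Fr(alpha,theta;(ell+1)/2,(ell'+1)/2,(ell''-1)/2,(ellcap-1)/2) * c((ell+1)/2; t-(j'+j''-j)) * c((ell'+1)/2;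 j'-j) * c((ell''-1)/2; j''-j) * c((ellcap-1)/2; j); (iv) the number with {1,t} intersect A = {1} and {1,t} intersect B = {t} is Fr(alpha,beta;(ell-1)/2,(ell'+1)/2,(ell''+1)/2,(ellcap-1)/2) * c((ell-1)/2; t-(j'+j''-j)) * c((ell'+1)/2; j'-j) * c((ell''+1)/2; j''-j) * c((ellcap-1)/2; j); (v) the number with {1,t} intersect A = {1,t} intersect B = {1,t} is Fr(gamma,gamma;(ell-1)/2,(ell'-1)/2,(ell''-1)/2,(ellcap+1)/2) * c((ell-1)/2; t-(j'+j''-j)) * c((ell'-1)/2; j'-j) * c((ell''-1)/2; j''-j) * c((ellcap+1)/2; j). -/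

import Mathlib

open Finset

noncomputable section

/-- Row vectors of `ℝ^t`. -/
abbrev Vec (t : ℕ) := Fin t → ℝ

/-- `T` is a vertex of the discrete hypercube `{1,-1}^t`. -/
def IsPMVertex {t : ℕ} (T : Vec t) : Prop := ∀ i, T i = 1 ∨ T i = -1

/-- `T` is a vertex of the discrete hypercube `{0,1}^t`. -/
def Is01Vertex {t : ℕ} (T : Vec t) : Prop := ∀ i, T i = 0 ∨ T i = 1

open Classical in
/-- Hamming distance between two vectors. -/
def hamming {t : ℕ} (X Y : Vec t) : ℕ :=
  (Finset.univ.filter fun i => X i ≠ Y i).card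

/-- The standard scalar product on `ℝ^t`. -/
def sprod {t : ℕ} (X Y : Vec t) : ℝ := ∑ i, X i * Y i

open Classical in
/-- The cardinality of the negative part `T⁻ = {e : T e = -1}` of `T`. -/
def negCard {t : ℕ} (T : Vec t) : ℕ :=
  (Finset.univ.filter fun i => T i = -1).card

open Classical in
/-- The Hamming weight (number of coordinates equal to `1`) of a `0/1`-vector. -/
def hwt01 {t : ℕ} (T : Vec t) : ℕ :=
  (Finset.univ.filter fun i => T i = 1).card

/-- `D` (read as a `2t`-periodic sequence `D^0, D^1, …`) is a symmetric cycle in the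
hypercube graph `H(t,2)` on the vertex set `{1,-1}^t`: all `D^k` are vertices,
consecutive members are adjacent (Hamming distance `1`), the `2t` members
`D^0, …, D^{2t-1}` are pairwise distinct, and `D^{k+t} = -D^k` for `0 ≤ k ≤ t-1`. -/
structure IsSymCycle (t : ℕ) (D : ℕ → Vec t) : Prop where
  vertex : ∀ k, IsPMVertex (D k)
  periodic : ∀ k, D (k + 2 * t) = D k
  adj : ∀ k, hamming (D k) (D (k + 1)) = 1
  inj : ∀ k l, k < 2 * t → l < 2 * t → D k = D l → k = l
  symm : ∀ k, k ≤ t - 1 → D (k + t) = -(D k)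

/-- `D` is a symmetric cycle in the hypercube graph on the vertex set `{0,1}^t`:
here `D^{k+t} = (1,…,1) - D^k` for `0 ≤ k ≤ t-1`. -/
structure IsSymCycle01 (t : ℕ) (D : ℕ → Vec t) : Prop where
  vertex : ∀ k, Is01Vertex (D k)
  periodic : ∀ k, D (k + 2 * t) = D k
  adj : ∀ k, hamming (D k) (D (k + 1)) = 1
  inj : ∀ k l, k < 2 * t → l < 2 * t → D k = D l → k = l
  symm : ∀ k, k ≤ t - 1 → D (k + t) = (fun _ => 1) - D k

open Classical in
/-- The vertex sequence `V(D) = (D^0, …, D^{2t-1})` of a cycle, as a finset. -/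
def VD (t : ℕ) (D : ℕ → Vec t) : Finset (Vec t) :=
  (Finset.range (2 * t)).image D

/-- `Q` is an inclusion-minimal subset of `V(D)` whose members sum to `T` (in `ℝ^t`). -/
def IsMinDecomp (t : ℕ) (D : ℕ → Vec t) (T : Vec t) (Q : Finset (Vec t)) : Prop :=
  Q ⊆ VD t D ∧ (∑ q ∈ Q, q) = T ∧
    ∀ Q' : Finset (Vec t), Q' ⊆ VD t D → (∑ q ∈ Q', q) = T → ¬Q' ⊂ Q

/-- The vertex `T_S ∈ {1,-1}^t` whose negative part is `S`. -/
def topeOf (t : ℕ) (S : Finset (Fin t)) : Vec t := fun i => if i ∈ S then -1 else 1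

/-- `x` is a coordinate vector of `T` w.r.t. `(D^0, …, D^{t-1})` with all
components in `{-1,0,1}`; by uniqueness this is the vector `x(T,D)`. -/
def IsXVec (t : ℕ) (D : ℕ → Vec t) (T : Vec t) (x : Fin t → ℝ) : Prop :=
  (∀ i, x i = -1 ∨ x i = 0 ∨ x i = 1) ∧ T = ∑ i : Fin t, x i • D (i : ℕ)

open Classical in
/-- The `{0,1}`-decomposition equation
`T = -(|Q|-1)/2 • (1,…,1) + ∑_{q ∈ Q, q ≠ 0} q`. -/
def Decomp01 (t : ℕ) (T : Vec t) (Q : Finset (Vec t)) : Prop :=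
  T = (-(((Q.card : ℝ) - 1) / 2)) • (fun _ => 1 : Vec t) +
    ∑ q ∈ Q.filter (fun q => q ≠ (0 : Vec t)), q

/-- `R^k` for `0 ≤ k ≤ t-1`: the all-ones vector with the first `k` coordinates negated. -/
def Rvec (t : ℕ) (k : ℕ) : Vec t := fun i => if (i : ℕ) < k then -1 else 1

/-- The distinguished symmetric cycle `R` in `H(t,2)`:
`R^0 = (1,…,1)`, `R^s = {}_{-[s]}R^0` for `1 ≤ s ≤ t-1`, and `R^{k+t} = -R^k`. -/
def Rcyc (t : ℕ) (k : ℕ) : Vec t :=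
  if k % (2 * t) < t then Rvec t (k % (2 * t)) else -(Rvec t (k % (2 * t) - t))

/-- `q(A) = ℓ`: an (automatically, the unique) inclusion-minimal subset of `V(R)`
summing to `T_A` has cardinality `ℓ`. -/
def qIs (t : ℕ) (A : Finset (Fin t)) (ℓ : ℕ) : Prop :=
  ∃ Q : Finset (Vec t), IsMinDecomp t (Rcyc t) (topeOf t A) Q ∧ Q.card = ℓ

/-- `c(m;n) = binom(n-1, m-1)`, the number of compositions of `n` into `m` positive
parts (zero whenever `m = 0` or `n ≤ 0`). -/
def comp (m : ℕ) (n : ℤ) : ℕ :=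
  if 1 ≤ m ∧ 1 ≤ n then ((n - 1).toNat).choose (m - 1) else 0

/-- The number of ternary Smirnov words (words with no two equal adjacent letters)
over the alphabet `(θ, α, β) = (0, 1, 2)` with Parikh vector `(k, i, j)`
(that is, `k` letters `θ`, `i` letters `α`, `j` letters `β`), starting with the
letter `s'` and ending with the letter `s''`. -/
def Tm (s' s'' : Fin 3) (k i j : ℕ) : ℕ :=
  Set.ncard { w : List (Fin 3) | List.Chain' (· ≠ ·) w ∧
    w.count 0 = k ∧ w.count 1 = i ∧ w.count 2 = j ∧
    w.head? = some s' ∧ w.getLast? = some s'' }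

/-- The number of Smirnov words over the alphabet `(θ, α, β, γ) = (0, 1, 2, 3)` with
Parikh vector `(k, i, j, h)`, starting with `s'` and ending with `s''`. -/
def Fr (s' s'' : Fin 4) (k i j h : ℕ) : ℕ :=
  Set.ncard { w : List (Fin 4) | List.Chain' (· ≠ ·) w ∧
    w.count 0 = k ∧ w.count 1 = i ∧ w.count 2 = j ∧ w.count 3 = h ∧
    w.head? = some s' ∧ w.getLast? = some s'' }

/-- Number of compositions with the convention `cc 0 0 = 1`. -/
def cc : ℕ → ℕ → ℕ
  | 0, 0 => 1
  | 0, _ + 1 => 0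
  | _ + 1, 0 => 0
  | m + 1, n + 1 => n.choose m

lemma cc_pascal (m n : ℕ) : cc (m + 1) (n + 1) = cc (m + 1) n + cc m n := by
  rcases n with _ | n
  · rcases m with _ | m <;> simp [cc]
  · rcases m with _ | m
    · simp [cc]
    · simp [cc, Nat.choose_succ_succ, add_comm]

lemma comp_eq_cc (m n : ℕ) (hn : 1 ≤ n) : comp m (n : ℤ) = cc m n := by
  obtain ⟨n, rfl⟩ : ∃ k, n = k + 1 := ⟨n - 1, by omega⟩
  rcases m with _ | m
  · simp [comp, cc]
  · simp [comp, cc]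

/-- Collapse runs. -/
def ds : List (Fin 4) → List (Fin 4)
  | [] => []
  | [a] => [a]
  | a :: b :: l => if a = b then ds (b :: l) else a :: ds (b :: l)

lemma ds_head (a : Fin 4) (l : List (Fin 4)) : ∃ l', ds (a :: l) = a :: l' := by
  induction l generalizing a with
  | nil => exact ⟨[], rfl⟩
  | cons b l ih =>
    by_cases h : a = b
    · subst h; simpa [ds] using ih a
    · exact ⟨ds (b :: l), by simp [ds, h]⟩

lemma ds_head? (w : List (Fin 4)) : (ds w).head? = w.head? := by
  cases w with
  | nil => rfl
  | cons a l => obtain ⟨l', h⟩ := ds_head a l; simp [h]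

lemma ds_last? (w : List (Fin 4)) : (ds w).getLast? = w.getLast? := by
  induction w with
  | nil => rfl
  | cons a l ih =>
    cases l with
    | nil => rfl
    | cons b l =>
      by_cases h : a = b
      · subst h; simp [ds, ih]
      · obtain ⟨l', hl⟩ := ds_head b l
        rw [hl] at ih
        simp only [ds, h, if_false, hl]
        rw [List.getLast?_cons_cons, List.getLast?_cons_cons, ih]

lemma ds_chain (w : List (Fin 4)) : List.IsChain (· ≠ ·) (ds w) := by
  induction w with
  | nil => simp [ds]
  | cons a l ih =>
    cases l with
    | nil => simp [ds]
    | cons b l =>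
      by_cases h : a = b
      · subst h; simpa [ds] using ih
      · obtain ⟨l', hl⟩ := ds_head b l
        rw [hl] at ih
        simp only [ds, h, if_false, hl]
        exact List.isChain_cons_cons.2 ⟨h, ih⟩

lemma ds_cons_eq (a b : Fin 4) (w v : List (Fin 4)) (hv : List.IsChain (· ≠ ·) (b :: v)) :
    ds (a :: w) = b :: v ↔ a = b ∧ (ds w = b :: v ∨ ds w = v) := by
  cases w with
  | nil =>
    simp [ds]
  | cons c l =>
    obtain ⟨l', hl⟩ := ds_head c l
    by_cases h : a = c
    · subst h
      simp only [ds, if_true, hl]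
      constructor
      · intro h; exact ⟨(List.cons.inj h).1, Or.inl h⟩
      · rintro ⟨rfl, h | h⟩
        · exact h
        · subst h; simp at hv
    · simp only [ds, h, if_false, hl]
      constructor
      · intro h; exact ⟨(List.cons.inj h).1, Or.inr (List.cons.inj h).2⟩
      · rintro ⟨rfl, h' | h'⟩
        · exact absurd (List.cons.inj h').1.symm h
        · rw [h']

lemma finite_lists (n : Fin 4 → ℕ) : {w : List (Fin 4) | ∀ c, w.count c = n c}.Finite := by
  apply (List.finite_length_eq (Fin 4) (∑ c, n c)).subset
  intro w hw
  simp only [Set.mem_setOf_eq] at hw ⊢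
  have := Multiset.sum_count_eq_card (s := (Finset.univ : Finset (Fin 4))) (m := (w : Multiset (Fin 4))) (by simp)
  simpa [hw] using this.symm

lemma fiber_count (N : ℕ) : ∀ (n : Fin 4 → ℕ) (v : List (Fin 4)), ∑ c, n c = N →
    List.IsChain (· ≠ ·) v →
    {w : List (Fin 4) | (∀ c, w.count c = n c) ∧ ds w = v}.ncard = ∏ c, cc (v.count c) (n c) := by
  induction N with
  | zero =>
    intro n v hn hv
    have hn0 : n = 0 := by
      funext c; exact (Finset.sum_eq_zero_iff.1 hn) c (Finset.mem_univ c)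
    subst hn0
    cases v with
    | nil =>
      have : {w : List (Fin 4) | (∀ c, w.count c = (0 : Fin 4 → ℕ) c) ∧ ds w = []} = {[]} := by
        ext w
        cases w with
        | nil => simp [ds]
        | cons a l =>
          obtain ⟨l', h⟩ := ds_head a l
          simp [h]
      rw [this]; simp [cc]
    | cons b v =>
      have : {w : List (Fin 4) | (∀ c, w.count c = (0 : Fin 4 → ℕ) c) ∧ ds w = b :: v} = ∅ := by
        ext w
        cases w with
        | nil => simp [ds]
        | cons a l =>
          simp only [Set.mem_setOf_eq, Set.mem_empty_iff_false, iff_false, not_and]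
          intro h; have := h a; simp at this
      rw [this, Set.ncard_empty]; symm
      apply Finset.prod_eq_zero (Finset.mem_univ b)
      simp [cc]
  | succ N ih =>
    intro n v hn hv
    cases v with
    | nil =>
      have : {w : List (Fin 4) | (∀ c, w.count c = n c) ∧ ds w = []} = ∅ := by
        ext w
        cases w with
        | nil =>
          simp only [Set.mem_setOf_eq, Set.mem_empty_iff_false, iff_false, not_and]
          intro h; simp at h; simp [← h] at hn
        | cons a l =>
          obtain ⟨l', h⟩ := ds_head a l
          simp [h]
      rw [this, Set.ncard_empty]; symm
      obtain ⟨c, hc, hc'⟩ : ∃ c ∈ (Finset.univ : Finset (Fin 4)), n c ≠ 0 := by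
        by_contra! h; rw [Finset.sum_eq_zero h] at hn; omega
      apply Finset.prod_eq_zero hc
      obtain ⟨k, hk⟩ := Nat.exists_eq_succ_of_ne_zero hc'
      simp [hk, cc]
    | cons b v =>
      rcases hb : n b with _ | k
      · have : {w : List (Fin 4) | (∀ c, w.count c = n c) ∧ ds w = b :: v} = ∅ := by
          ext w
          cases w with
          | nil => simp [ds]
          | cons a l =>
            simp only [Set.mem_setOf_eq, Set.mem_empty_iff_false, iff_false, not_and]
            intro h h'
            have := ((ds_cons_eq a b l v hv).1 h').1
            subst this
            have := h a; simp [hb] at this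
        rw [this, Set.ncard_empty]; symm
        apply Finset.prod_eq_zero (Finset.mem_univ b)
        simp [cc, hb]
      · set n' : Fin 4 → ℕ := Function.update n b k with hn'
        have hsum : ∑ c, n' c = N := by
          have h1 := Finset.sum_update_of_mem (Finset.mem_univ b) n k
          have h2 := Finset.add_sum_erase Finset.univ n (Finset.mem_univ b)
          rw [← Finset.erase_eq] at h1
          rw [hn', h1]; omega
        have hset : {w : List (Fin 4) | (∀ c, w.count c = n c) ∧ ds w = b :: v} =
            (fun w => b :: w) '' ({w : List (Fin 4) | (∀ c, w.count c = n' c) ∧ ds w = b :: v} ∪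
              {w : List (Fin 4) | (∀ c, w.count c = n' c) ∧ ds w = v}) := by
          have key : ∀ l : List (Fin 4), (∀ c, (b :: l).count c = n c) ↔ (∀ c, l.count c = n' c) := by
            intro l
            apply forall_congr'
            intro c
            by_cases hc : c = b
            · subst hc; simp [hn', hb]
            · simp [hn', Function.update_of_ne hc, List.count_cons_of_ne (Ne.symm hc)]
          ext w
          cases w with
          | nil => simp [ds]
          | cons a l =>
            simp only [Set.mem_setOf_eq, Set.mem_image, Set.mem_union]
            rw [ds_cons_eq a b l v hv]
            constructor
            · rintro ⟨h1, rfl, h2⟩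
              rw [key] at h1
              exact ⟨l, by tauto, rfl⟩
            · rintro ⟨l', h, h'⟩
              obtain ⟨rfl, rfl⟩ := List.cons.inj h'
              rw [key]; tauto
        rw [hset, Set.ncard_image_of_injective _ (List.cons_injective),
          Set.ncard_union_eq _ ((finite_lists n').subset fun w hw => hw.1)
            ((finite_lists n').subset fun w hw => hw.1),
          ih n' _ hsum hv, ih n' v hsum hv.tail]
        · rw [← Finset.mul_prod_erase _ _ (Finset.mem_univ b),
            ← Finset.mul_prod_erase _ _ (Finset.mem_univ b),
            ← Finset.mul_prod_erase _ _ (Finset.mem_univ b)]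
          have e1 : ∏ x ∈ Finset.univ.erase b, cc ((b :: v).count x) (n' x) =
              ∏ x ∈ Finset.univ.erase b, cc ((b :: v).count x) (n x) := by
            apply Finset.prod_congr rfl
            intro c hc
            have hc := Finset.ne_of_mem_erase hc
            simp [hn', Function.update_of_ne hc]
          have e2 : ∏ x ∈ Finset.univ.erase b, cc (v.count x) (n' x) =
              ∏ x ∈ Finset.univ.erase b, cc ((b :: v).count x) (n x) := by
            apply Finset.prod_congr rfl
            intro c hc
            have hc := Finset.ne_of_mem_erase hc
            simp [hn', Function.update_of_ne hc, List.count_cons_of_ne (Ne.symm hc)]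
          rw [e1, e2, ← add_mul]
          congr 1
          simp [hn', hb, cc_pascal]
        · rw [Set.disjoint_left]
          rintro w ⟨_, h1⟩ ⟨_, h2⟩
          rw [h1] at h2
          simp at h2

lemma word_count (s' s'' : Fin 4) (n m : Fin 4 → ℕ) :
    {w : List (Fin 4) | (∀ c, w.count c = n c) ∧ (∀ c, (ds w).count c = m c) ∧
      w.head? = some s' ∧ w.getLast? = some s''}.ncard =
    Fr s' s'' (m 0) (m 1) (m 2) (m 3) * ∏ c, cc (m c) (n c) := by
  classical
  set W := {w : List (Fin 4) | (∀ c, w.count c = n c) ∧ (∀ c, (ds w).count c = m c) ∧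
      w.head? = some s' ∧ w.getLast? = some s''} with hW
  set V := {w : List (Fin 4) | List.IsChain (· ≠ ·) w ∧ (∀ c, w.count c = m c) ∧
      w.head? = some s' ∧ w.getLast? = some s''} with hV
  have hFr : Fr s' s'' (m 0) (m 1) (m 2) (m 3) = V.ncard := by
    unfold Fr
    congr 1
    ext w
    simp only [hV, Set.mem_setOf_eq, Fin.forall_fin_succ]
    simp
    tauto
  have fW : W.Finite := (finite_lists n).subset fun w hw => hw.1
  have fV : V.Finite := (finite_lists m).subset fun w hw => hw.2.1
  rw [hFr, Set.ncard_eq_toFinset_card _ fW, Set.ncard_eq_toFinset_card _ fV]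
  rw [Finset.card_eq_sum_card_fiberwise (f := ds) (t := fV.toFinset)]
  · rw [← smul_eq_mul, ← Finset.sum_const]
    apply Finset.sum_congr rfl
    intro v hv
    have hv' : v ∈ V := by simpa using hv
    have := fiber_count _ n v rfl hv'.1
    rw [Set.ncard_eq_toFinset_card _ ((finite_lists n).subset fun w hw => hw.1)] at this
    simp only [hv'.2.1] at this
    rw [← this]
    congr 1
    ext w
    simp only [Finset.mem_filter, Set.Finite.mem_toFinset, hW, Set.mem_setOf_eq]
    constructor
    · tauto
    · rintro ⟨h1, rfl⟩
      refine ⟨⟨h1, hv'.2.1, ?_, ?_⟩, rfl⟩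
      · rw [← ds_head?]; exact hv'.2.2.1
      · rw [← ds_last?]; exact hv'.2.2.2
  · intro w hw
    have hw' : w ∈ W := by simpa using hw
    simp only [Set.Finite.coe_toFinset, hV, Set.mem_setOf_eq]
    exact ⟨ds_chain w, hw'.2.1, by rw [ds_head?]; exact hw'.2.2.1, by rw [ds_last?]; exact hw'.2.2.2⟩

lemma blocks (c : Fin 4) (w : List (Fin 4)) (s' s'' : Fin 4) (h' : w.head? = some s')
    (h'' : w.getLast? = some s'') :
    (∑ i ∈ Finset.range (w.length - 1), if (w[i]? = some c ↔ w[i + 1]? = some c) then 0 else 1) +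
      (if s' = c then 1 else 0) + (if s'' = c then 1 else 0) = 2 * (ds w).count c := by
  induction w generalizing s' with
  | nil => simp at h'
  | cons a l ih =>
    simp at h'
    subst h'
    cases l with
    | nil =>
      simp at h''
      subst h''
      simp [ds, List.count_cons]
      split_ifs <;> rfl
    | cons b l =>
      rw [List.getLast?_cons_cons] at h''
      have := ih b rfl h''
      simp only [List.length_cons, Nat.add_sub_cancel] at this ⊢
      rw [Finset.sum_range_succ']
      simp only [List.getElem?_cons_succ, List.getElem?_cons_zero, Option.some.injEq] at this ⊢
      by_cases hab : a = b
      · subst hab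
        simp [ds] at this ⊢
        omega
      · simp only [ds, hab, if_false, List.count_cons, beq_iff_eq]
        by_cases h1 : a = c <;> by_cases h2 : b = c
        · exact absurd (h1.trans h2.symm) hab
        all_goals simp [h1, h2] at this ⊢; omega

lemma Rcyc_lt (n k : ℕ) (hk : k < n + 1) : Rcyc (n + 1) k = Rvec (n + 1) k := by
  unfold Rcyc
  rw [Nat.mod_eq_of_lt (by omega), if_pos hk]

lemma Rcyc_ge (n k : ℕ) (hk : k < n + 1) : Rcyc (n + 1) (n + 1 + k) = -Rvec (n + 1) k := by
  unfold Rcyc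
  rw [Nat.mod_eq_of_lt (by omega), if_neg (by omega)]
  congr 2; omega

lemma Rvec_inj (n k l : ℕ) (hk : k < n + 1) (hl : l < n + 1)
    (h : Rvec (n + 1) k = Rvec (n + 1) l) : k = l := by
  rcases lt_trichotomy k l with h1 | h1 | h1
  · have := congrFun h ⟨k, hk⟩
    simp [Rvec, h1] at this; norm_num at this
  · exact h1
  · have := congrFun h ⟨l, hl⟩
    simp [Rvec, h1] at this; norm_num at this

lemma Rvec_last (n k : ℕ) (hk : k < n + 1) : Rvec (n + 1) k (Fin.last n) = 1 := by
  simp [Rvec]; omega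

lemma Rvec_ne_neg (n k l : ℕ) (hk : k < n + 1) (hl : l < n + 1) :
    Rvec (n + 1) k ≠ -Rvec (n + 1) l := by
  intro h
  have := congrFun h (Fin.last n)
  rw [Pi.neg_apply, Rvec_last n k hk, Rvec_last n l hl] at this
  norm_num at this

open Classical in
lemma sum_Q {M : Type*} [AddCommMonoid M] (n : ℕ) (Q : Finset (Vec (n + 1)))
    (hQ : Q ⊆ VD (n + 1) (Rcyc (n + 1))) (F : Vec (n + 1) → M) :
    ∑ q ∈ Q, F q = ∑ k ∈ Finset.range (n + 1),
      ((if Rvec (n + 1) k ∈ Q then F (Rvec (n + 1) k) else 0) +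
       (if -Rvec (n + 1) k ∈ Q then F (-Rvec (n + 1) k) else 0)) := by
  have h1 : ∑ q ∈ Q, F q = ∑ q ∈ VD (n + 1) (Rcyc (n + 1)), if q ∈ Q then F q else 0 := by
    rw [← Finset.sum_filter, Finset.filter_mem_eq_inter, Finset.inter_eq_right.2 hQ]
  rw [h1, VD, Finset.sum_image, two_mul, Finset.sum_range_add, Finset.sum_add_distrib]
  · congr 1
    · apply Finset.sum_congr rfl
      intro k hk
      rw [Rcyc_lt n k (Finset.mem_range.1 hk)]
    · apply Finset.sum_congr rfl
      intro k hk
      rw [Rcyc_ge n k (Finset.mem_range.1 hk)]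
  · intro a ha b hb hab
    simp only [Finset.coe_range, Set.mem_Iio] at ha hb
    rcases lt_or_ge a (n + 1) with h | h <;> rcases lt_or_ge b (n + 1) with h' | h'
    · rw [Rcyc_lt n a h, Rcyc_lt n b h'] at hab
      exact Rvec_inj n a b h h' hab
    · obtain ⟨b, rfl⟩ := Nat.exists_eq_add_of_le h'
      rw [Rcyc_lt n a h, Rcyc_ge n b (by omega)] at hab
      exact absurd hab (Rvec_ne_neg n _ _ h (by omega))
    · obtain ⟨a, rfl⟩ := Nat.exists_eq_add_of_le h
      rw [Rcyc_lt n b h', Rcyc_ge n a (by omega)] at hab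
      exact absurd hab.symm (Rvec_ne_neg n _ _ h' (by omega))
    · obtain ⟨a, rfl⟩ := Nat.exists_eq_add_of_le h
      obtain ⟨b, rfl⟩ := Nat.exists_eq_add_of_le h'
      rw [Rcyc_ge n b (by omega), Rcyc_ge n a (by omega)] at hab
      rw [Rvec_inj n a b (by omega) (by omega) (neg_injective hab)]

/-- Coordinates of a vector with respect to `R`. -/
def xc (n : ℕ) (T : ℕ → ℝ) : ℕ → ℝ
  | 0 => (T 0 + T n) / 2
  | k + 1 => (T (k + 1) - T k) / 2

lemma xc_unique (n : ℕ) (T y : ℕ → ℝ)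
    (h : ∀ i, i < n + 1 → T i = ∑ k ∈ Finset.range (n + 1), y k * (if i < k then -1 else 1))
    (k : ℕ) (hk : k < n + 1) : y k = xc n T k := by
  cases k with
  | zero =>
    have : T 0 + T n = ∑ k ∈ Finset.range (n + 1), if k = 0 then 2 * y k else 0 := by
      rw [h 0 (by omega), h n (by omega), ← Finset.sum_add_distrib]
      apply Finset.sum_congr rfl
      intro k hk
      have : ¬ n < k := by simp at hk; omega
      rw [if_neg this]
      rcases Nat.eq_zero_or_pos k with h | h
      · simp [h]; ring
      · rw [if_pos h, if_neg (by omega)]; ring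
    rw [Finset.sum_ite_eq' (Finset.range (n + 1)), if_pos (by simp)] at this
    simp only [xc, this]; ring
  | succ i =>
    have : T (i + 1) - T i = ∑ k ∈ Finset.range (n + 1), if k = i + 1 then 2 * y k else 0 := by
      rw [h (i + 1) (by omega), h i (by omega), ← Finset.sum_sub_distrib]
      apply Finset.sum_congr rfl
      intro k hk
      rcases lt_trichotomy k (i + 1) with h | h | h
      · rw [if_neg (by omega), if_neg (by omega), if_neg (by omega)]; ring
      · rw [if_neg (by omega), if_pos (by omega), if_pos h]; ring
      · rw [if_pos (by omega), if_pos (by omega), if_neg (by omega)]; ring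
    rw [Finset.sum_ite_eq' (Finset.range (n + 1)), if_pos (by simpa using hk)] at this
    simp only [xc, this]; ring

lemma xc_sum (n : ℕ) (T : ℕ → ℝ) (i : ℕ) (hi : i < n + 1) :
    ∑ k ∈ Finset.range (n + 1), xc n T k * (if i < k then -1 else 1) = T i := by
  rw [Finset.sum_range_succ']
  have key : ∀ m, ∑ k ∈ Finset.range m, xc n T (k + 1) * (if i < k + 1 then -1 else 1) =
      (T (min i m) - T 0) / 2 - (T m - T (min i m)) / 2 := by
    intro m
    induction m with
    | zero => simp
    | succ m ih =>
      rw [Finset.sum_range_succ, ih]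
      rcases lt_or_ge i (m + 1) with h | h
      · rw [if_pos h, min_eq_left (by omega), min_eq_left (by omega)]
        simp only [xc]; ring
      · rw [if_neg (by omega), min_eq_right (by omega), min_eq_right (by omega)]
        simp only [xc]; ring
  rw [key, min_eq_left (by omega)]
  simp [xc]; ring

open Classical in
/-- Value of `q`. -/
def qv (n : ℕ) (P : ℕ → Prop) : ℕ :=
  (if (P 0 ↔ P n) then 1 else 0) + ∑ i ∈ Finset.range n, if (P i ↔ P (i + 1)) then 0 else 1

open Classical in
lemma qv_eq (n : ℕ) (P : ℕ → Prop) :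
    (qv n P : ℝ) = ∑ k ∈ Finset.range (n + 1), |xc n (fun i => if P i then -1 else 1) k| := by
  rw [Finset.sum_range_succ', add_comm, qv]
  push_cast
  congr 1
  · simp only [xc]
    by_cases h1 : P 0 <;> by_cases h2 : P n <;> simp [h1, h2] <;> norm_num
  · apply Finset.sum_congr rfl
    intro i _
    simp only [xc]
    by_cases h1 : P i <;> by_cases h2 : P (i + 1) <;> simp [h1, h2] <;> norm_num

open Classical in
lemma qIs_iff (n : ℕ) (A : Finset (Fin (n + 1))) (P : ℕ → Prop)
    (hP : ∀ i : Fin (n + 1), i ∈ A ↔ P i) (ℓ : ℕ) : qIs (n + 1) A ℓ ↔ ℓ = qv n P := by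
  set T : ℕ → ℝ := fun i => if P i then -1 else 1 with hT
  set x := xc n T with hx
  have hTA : ∀ i : Fin (n + 1), topeOf (n + 1) A i = T i := by
    intro i; simp [topeOf, hT, hP]
  -- coordinates of a decomposition
  have hcoord : ∀ Q : Finset (Vec (n + 1)), Q ⊆ VD (n + 1) (Rcyc (n + 1)) →
      (∑ q ∈ Q, q) = topeOf (n + 1) A → ∀ k, k < n + 1 →
      (if Rvec (n + 1) k ∈ Q then (1 : ℝ) else 0) - (if -Rvec (n + 1) k ∈ Q then 1 else 0) = x k := by
    intro Q hQ hs k hk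
    refine xc_unique n T (fun k => (if Rvec (n + 1) k ∈ Q then (1 : ℝ) else 0) -
      (if -Rvec (n + 1) k ∈ Q then 1 else 0)) ?_ k hk
    intro i hi
    have h1 := hTA ⟨i, hi⟩
    rw [← hs, Finset.sum_apply, sum_Q n Q hQ (fun q => q ⟨i, hi⟩)] at h1
    rw [← h1]
    apply Finset.sum_congr rfl
    intro k _
    simp only [Pi.neg_apply, Rvec]
    split_ifs <;> norm_num
  have hcard : ∀ Q, IsMinDecomp (n + 1) (Rcyc (n + 1)) (topeOf (n + 1) A) Q → Q.card = qv n P := by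
    rintro Q ⟨hQ, hs, hmin⟩
    have hc := hcoord Q hQ hs
    have : (Q.card : ℝ) = qv n P := by
      rw [qv_eq, Finset.cast_card, sum_Q n Q hQ (fun _ => (1 : ℝ))]
      apply Finset.sum_congr rfl
      intro k hk
      rw [Finset.mem_range] at hk
      rw [← hT, ← hx, ← hc k hk]
      by_cases h1 : Rvec (n + 1) k ∈ Q <;> by_cases h2 : -Rvec (n + 1) k ∈ Q
      · exfalso
        have hne := Rvec_ne_neg n k k hk hk
        have h2' : -Rvec (n + 1) k ∈ Q.erase (Rvec (n + 1) k) := Finset.mem_erase.2 ⟨hne.symm, h2⟩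
        refine hmin ((Q.erase (Rvec (n + 1) k)).erase (-Rvec (n + 1) k)) ?_ ?_ ?_
        · exact ((Finset.erase_subset _ _).trans (Finset.erase_subset _ _)).trans hQ
        · have e1 := Finset.add_sum_erase Q (fun q => q) h1
          have e2 := Finset.add_sum_erase _ (fun q => q) h2'
          rw [← e2, hs] at e1
          simpa using e1
        · exact (Finset.erase_ssubset h2').trans (Finset.erase_ssubset h1)
      all_goals simp [h1, h2]
    exact_mod_cast this
  constructor
  · rintro ⟨Q, hQ, rfl⟩
    exact hcard Q hQ
  · rintro rfl
    suffices h : ∃ Q, IsMinDecomp (n + 1) (Rcyc (n + 1)) (topeOf (n + 1) A) Q by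
      obtain ⟨Q, hQ⟩ := h
      exact ⟨Q, hQ, hcard Q hQ⟩
    have hxv : ∀ k, x k = 0 ∨ x k = 1 ∨ x k = -1 := by
      intro k
      cases k with
      | zero =>
        simp only [hx, hT, xc]; split_ifs <;> norm_num
      | succ k =>
        simp only [hx, hT, xc]; split_ifs <;> norm_num
    have hex : ∃ Q : Finset (Vec (n + 1)), Q ⊆ VD (n + 1) (Rcyc (n + 1)) ∧
        (∑ q ∈ Q, q) = topeOf (n + 1) A := by
      refine ⟨((Finset.range (n + 1)).filter (fun k => x k ≠ 0)).image
        (fun k => x k • Rvec (n + 1) k), ?_, ?_⟩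
      · intro q hq
        simp only [Finset.mem_image, Finset.mem_filter, Finset.mem_range] at hq
        obtain ⟨k, ⟨hk, hk0⟩, rfl⟩ := hq
        rw [VD, Finset.mem_image]
        rcases hxv k with h | h | h
        · exact absurd h hk0
        · exact ⟨k, by simp; omega, by rw [Rcyc_lt n k hk, h, one_smul]⟩
        · exact ⟨n + 1 + k, by simp; omega, by rw [Rcyc_ge n k hk, h, neg_smul, one_smul]⟩
      · rw [Finset.sum_image]
        · rw [Finset.sum_filter_of_ne]
          · funext i
            rw [hTA, Finset.sum_apply, ← xc_sum n T i i.2]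
            rfl
          · intro k _ h h0
            rw [h0, zero_smul] at h; exact h rfl
        · intro a ha b hb hab
          simp only [Finset.coe_filter, Finset.mem_range, Set.mem_setOf_eq] at ha hb
          have hab' : x a • Rvec (n + 1) a = x b • Rvec (n + 1) b := hab
          have e := congrFun hab' (Fin.last n)
          simp only [Pi.smul_apply, Rvec_last n a ha.1, Rvec_last n b hb.1, smul_eq_mul,
            mul_one] at e
          rw [e] at hab'
          exact Rvec_inj n a b ha.1 hb.1 (smul_right_injective _ hb.2 hab')
    -- take one of minimal cardinality
    have hex' : ∃ m, ∃ Q : Finset (Vec (n + 1)), Q.card = m ∧ Q ⊆ VD (n + 1) (Rcyc (n + 1)) ∧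
        (∑ q ∈ Q, q) = topeOf (n + 1) A := by
      obtain ⟨Q, hQ⟩ := hex
      exact ⟨_, Q, rfl, hQ⟩
    obtain ⟨Q, hc, hQ, hs⟩ := Nat.find_spec hex'
    refine ⟨Q, hQ, hs, fun Q' h1 h2 h3 => ?_⟩
    have := Finset.card_lt_card h3
    rw [hc] at this
    exact Nat.find_min hex' this ⟨Q', rfl, h1, h2⟩

/-- The letter of position `i`. -/
def ltr {t : ℕ} (A B : Finset (Fin t)) (i : Fin t) : Fin 4 :=
  if i ∈ A then (if i ∈ B then 3 else 1) else (if i ∈ B then 2 else 0)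

/-- The word of a pair. -/
def wd {t : ℕ} (A B : Finset (Fin t)) : List (Fin 4) := List.ofFn (ltr A B)

lemma ltr3 {t : ℕ} (A B : Finset (Fin t)) (i : Fin t) : ltr A B i = 3 ↔ i ∈ A ∧ i ∈ B := by
  unfold ltr; split_ifs <;> simp [*]
lemma ltr2 {t : ℕ} (A B : Finset (Fin t)) (i : Fin t) : ltr A B i = 2 ↔ i ∉ A ∧ i ∈ B := by
  unfold ltr; split_ifs <;> simp [*]
lemma ltr1 {t : ℕ} (A B : Finset (Fin t)) (i : Fin t) : ltr A B i = 1 ↔ i ∈ A ∧ i ∉ B := by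
  unfold ltr; split_ifs <;> simp [*]
lemma ltr0 {t : ℕ} (A B : Finset (Fin t)) (i : Fin t) : ltr A B i = 0 ↔ i ∉ A ∧ i ∉ B := by
  unfold ltr; split_ifs <;> simp [*]

lemma wd_count {t : ℕ} (A B : Finset (Fin t)) (c : Fin 4) :
    (wd A B).count c = (Finset.univ.filter (fun i => ltr A B i = c)).card := by
  have h := Fin.univ_val_map (ltr A B)
  rw [wd, ← Multiset.coe_count, ← h, Multiset.count_map]
  simp only [Finset.card, Finset.filter_val, eq_comm]

lemma wd_inj {t : ℕ} : Function.Injective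
    (fun p : Finset (Fin t) × Finset (Fin t) => wd p.1 p.2) := by
  rintro ⟨A, B⟩ ⟨A', B'⟩ h
  have h' := List.ofFn_injective h
  have h3 : ∀ i, ltr A B i = ltr A' B' i := fun i => congrFun h' i
  have a3 : ∀ i, (ltr A B i = 3 ↔ ltr A' B' i = 3) := fun i => by rw [h3 i]
  have a2 : ∀ i, (ltr A B i = 2 ↔ ltr A' B' i = 2) := fun i => by rw [h3 i]
  have a1 : ∀ i, (ltr A B i = 1 ↔ ltr A' B' i = 1) := fun i => by rw [h3 i]
  simp only [ltr1, ltr2, ltr3] at a1 a2 a3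
  refine Prod.ext ?_ ?_ <;> ext i <;> have := a1 i <;> have := a2 i <;> have := a3 i <;>
    simp only <;> tauto

lemma wd_get {t : ℕ} (A B : Finset (Fin t)) (i : Fin t) :
    (wd A B)[(i : ℕ)]? = some (ltr A B i) := by
  simp [wd]

lemma wd_head {n : ℕ} (A B : Finset (Fin (n + 1))) : (wd A B).head? = some (ltr A B 0) := by
  simp [wd, List.ofFn_succ]

lemma wd_last {n : ℕ} (A B : Finset (Fin (n + 1))) :
    (wd A B).getLast? = some (ltr A B (Fin.last n)) := by
  rw [List.getLast?_eq_getElem?]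
  have : (wd A B).length - 1 = (Fin.last n : ℕ) := by simp [wd]
  rw [this, wd_get]

open Classical in
lemma qv_not (n : ℕ) (P : ℕ → Prop) : qv n (fun i => ¬ P i) = qv n P := by
  unfold qv
  congr 1
  · by_cases h1 : P 0 <;> by_cases h2 : P n <;> simp [h1, h2]
  · refine Finset.sum_congr rfl fun i _ => ?_
    by_cases h1 : P i <;> by_cases h2 : P (i + 1) <;> simp [h1, h2]

lemma qv_wd {n : ℕ} (A B : Finset (Fin (n + 1))) (c : Fin 4) :
    qv n (fun i => (wd A B)[i]? = some c) + (if ltr A B 0 = c then 1 else 0) +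
      (if ltr A B (Fin.last n) = c then 1 else 0) =
    (if (ltr A B 0 = c ↔ ltr A B (Fin.last n) = c) then 1 else 0) + 2 * (ds (wd A B)).count c := by
  rw [← blocks c (wd A B) _ _ (wd_head A B) (wd_last A B)]
  have e0 := wd_get A B 0
  have e1 := wd_get A B (Fin.last n)
  have el : (wd A B).length - 1 = n := by simp [wd]
  simp only [Fin.val_zero, Fin.val_last] at e0 e1
  rw [el, qv, e0, e1]
  simp only [Option.some.injEq, add_assoc]
  congr!

lemma q_letter {n : ℕ} (A B C : Finset (Fin (n + 1))) (c s' s'' : Fin 4) (ℓ m : ℕ)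
    (hC : (∀ i, i ∈ C ↔ ltr A B i = c) ∨ (∀ i, i ∈ C ↔ ¬ ltr A B i = c))
    (h0 : ltr A B 0 = s') (h1 : ltr A B (Fin.last n) = s'')
    (hm : ℓ + (if s' = c then 1 else 0) + (if s'' = c then 1 else 0) =
      (if (s' = c ↔ s'' = c) then 1 else 0) + 2 * m) :
    qIs (n + 1) C ℓ ↔ (ds (wd A B)).count c = m := by
  have hq : qIs (n + 1) C ℓ ↔ ℓ = qv n (fun i => (wd A B)[i]? = some c) := by
    rcases hC with hC | hC
    · apply qIs_iff
      intro i; rw [wd_get, Option.some.injEq]; exact hC i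
    · rw [← qv_not]
      apply qIs_iff
      intro i; rw [wd_get, Option.some.injEq]; exact hC i
  rw [hq]
  have := qv_wd A B c
  rw [h0, h1] at this
  omega

lemma wd_surj {t : ℕ} (w : List (Fin 4)) (h : w.length = t) :
    ∃ A B : Finset (Fin t), wd A B = w := by
  subst h
  refine ⟨Finset.univ.filter (fun i => w.get i = 1 ∨ w.get i = 3),
    Finset.univ.filter (fun i => w.get i = 2 ∨ w.get i = 3), ?_⟩
  conv_rhs => rw [← List.ofFn_get w]
  unfold wd
  congr 1
  funext i
  simp only [ltr, Finset.mem_filter, Finset.mem_univ, true_and]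
  generalize w.get i = c
  fin_cases c <;> simp

lemma gen_count (n j' j'' j ℓ' ℓ'' ℓcap ℓ : ℕ) (s' s'' : Fin 4) (m0 m1 m2 m3 : ℕ)
    (h0 : ℓ + (if s' = 0 then 1 else 0) + (if s'' = 0 then 1 else 0) =
      (if (s' = 0 ↔ s'' = 0) then 1 else 0) + 2 * m0)
    (h1 : ℓ' + (if s' = 1 then 1 else 0) + (if s'' = 1 then 1 else 0) =
      (if (s' = 1 ↔ s'' = 1) then 1 else 0) + 2 * m1)
    (h2 : ℓ'' + (if s' = 2 then 1 else 0) + (if s'' = 2 then 1 else 0) =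
      (if (s' = 2 ↔ s'' = 2) then 1 else 0) + 2 * m2)
    (h3 : ℓcap + (if s' = 3 then 1 else 0) + (if s'' = 3 then 1 else 0) =
      (if (s' = 3 ↔ s'' = 3) then 1 else 0) + 2 * m3)
    (S : Set (Finset (Fin (n + 1)) × Finset (Fin (n + 1))))
    (hS : ∀ p, p ∈ S ↔ (p.1.card = j' ∧ j' < n + 1 ∧ p.2.card = j'' ∧ j'' < n + 1 ∧
      (p.1 ∩ p.2).card = j ∧ 0 < j ∧ j' < (p.1 ∪ p.2).card ∧ j'' < (p.1 ∪ p.2).card ∧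
      (p.1 ∪ p.2).card < n + 1 ∧ qIs (n + 1) (p.1 \ p.2) ℓ' ∧ qIs (n + 1) (p.2 \ p.1) ℓ'' ∧
      qIs (n + 1) (p.1 ∩ p.2) ℓcap ∧ qIs (n + 1) (p.1 ∪ p.2) ℓ) ∧
      ltr p.1 p.2 0 = s' ∧ ltr p.1 p.2 (Fin.last n) = s'') :
    S.ncard = Fr s' s'' m0 m1 m2 m3 *
      comp m0 (((n + 1 : ℕ) : ℤ) - ((j' : ℤ) + (j'' : ℤ) - (j : ℤ))) *
      comp m1 ((j' : ℤ) - (j : ℤ)) * comp m2 ((j'' : ℤ) - (j : ℤ)) * comp m3 (j : ℤ) := by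
  -- cardinalities
  have hcards : ∀ A B : Finset (Fin (n + 1)),
      (wd A B).count 3 = (A ∩ B).card ∧ (wd A B).count 1 + (A ∩ B).card = A.card ∧
      (wd A B).count 2 + (A ∩ B).card = B.card ∧ (wd A B).count 0 + (A ∪ B).card = n + 1 ∧
      (A ∪ B).card + (A ∩ B).card = A.card + B.card := by
    intro A B
    refine ⟨?_, ?_, ?_, ?_, Finset.card_union_add_card_inter A B⟩
    · rw [wd_count]; congr 1; ext i; simp [ltr3]
    · rw [wd_count, ← Finset.card_sdiff_add_card_inter A B]; congr 2; ext i; simp [ltr1]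
    · rw [wd_count, Finset.inter_comm, ← Finset.card_sdiff_add_card_inter B A]; congr 2; ext i
      simp [ltr2, and_comm]
    · have := Finset.card_compl_add_card (A ∪ B)
      rw [Fintype.card_fin] at this
      rw [wd_count]; refine Eq.trans ?_ this; congr 2; ext i; simp [ltr0]
  by_cases hcond : 0 < j ∧ j < j' ∧ j < j'' ∧ j' + j'' < n + 1 + j
  · obtain ⟨c1, c2, c3, c4⟩ := hcond
    have hw := word_count s' s'' ![n + 1 + j - (j' + j''), j' - j, j'' - j, j] ![m0, m1, m2, m3]
    have him : (fun p : Finset (Fin (n + 1)) × Finset (Fin (n + 1)) => wd p.1 p.2) '' S =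
        {w : List (Fin 4) | (∀ c, w.count c = ![n + 1 + j - (j' + j''), j' - j, j'' - j, j] c) ∧
          (∀ c, (ds w).count c = ![m0, m1, m2, m3] c) ∧
          w.head? = some s' ∧ w.getLast? = some s''} := by
      have key : ∀ A B : Finset (Fin (n + 1)), (A, B) ∈ S ↔
          ((∀ c, (wd A B).count c = ![n + 1 + j - (j' + j''), j' - j, j'' - j, j] c) ∧
          (∀ c, (ds (wd A B)).count c = ![m0, m1, m2, m3] c) ∧
          (wd A B).head? = some s' ∧ (wd A B).getLast? = some s'') := by
        intro A B
        rw [hS, wd_head, wd_last, Option.some.injEq, Option.some.injEq]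
        obtain ⟨k1, k2, k3, k4, k5⟩ := hcards A B
        have hA : (∀ c, (wd A B).count c = ![n + 1 + j - (j' + j''), j' - j, j'' - j, j] c) ↔
            ((wd A B).count 0 = n + 1 + j - (j' + j'') ∧ (wd A B).count 1 = j' - j ∧
              (wd A B).count 2 = j'' - j ∧ (wd A B).count 3 = j) := by
          simp [Fin.forall_fin_succ]
        have hB : (∀ c, (ds (wd A B)).count c = ![m0, m1, m2, m3] c) ↔
            ((ds (wd A B)).count 0 = m0 ∧ (ds (wd A B)).count 1 = m1 ∧
              (ds (wd A B)).count 2 = m2 ∧ (ds (wd A B)).count 3 = m3) := by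
          simp [Fin.forall_fin_succ]
        rw [hA, hB]
        have hq : ltr A B 0 = s' ∧ ltr A B (Fin.last n) = s'' →
            ((qIs (n + 1) (A \ B) ℓ' ↔ (ds (wd A B)).count 1 = m1) ∧
            (qIs (n + 1) (B \ A) ℓ'' ↔ (ds (wd A B)).count 2 = m2) ∧
            (qIs (n + 1) (A ∩ B) ℓcap ↔ (ds (wd A B)).count 3 = m3) ∧
            (qIs (n + 1) (A ∪ B) ℓ ↔ (ds (wd A B)).count 0 = m0)) := by
          rintro ⟨g1, g2⟩
          refine ⟨q_letter A B _ 1 s' s'' _ _ (Or.inl ?_) g1 g2 h1,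
            q_letter A B _ 2 s' s'' _ _ (Or.inl ?_) g1 g2 h2,
            q_letter A B _ 3 s' s'' _ _ (Or.inl ?_) g1 g2 h3,
            q_letter A B _ 0 s' s'' _ _ (Or.inr ?_) g1 g2 h0⟩
          · intro i; simp [ltr1]
          · intro i; simp [ltr2, and_comm]
          · intro i; simp [ltr3]
          · intro i; rw [ltr0, Finset.mem_union]; tauto
        constructor
        · rintro ⟨⟨a1, a2, a3, a4, a5, a6, a7, a8, a9, b1, b2, b3, b4⟩, g⟩
          obtain ⟨q1, q2, q3, q4⟩ := hq g
          simp only at *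
          exact ⟨by omega, ⟨q4.1 b4, q1.1 b1, q2.1 b2, q3.1 b3⟩, g⟩
        · rintro ⟨⟨a1, a2, a3, a4⟩, ⟨b0, b1, b2, b3⟩, g⟩
          obtain ⟨q1, q2, q3, q4⟩ := hq g
          exact ⟨⟨by simp only; omega, by omega, by simp only; omega, by omega,
            by simp only; omega, by omega, by simp only; omega, by simp only; omega,
            by simp only; omega, q1.2 b1, q2.2 b2, q3.2 b3, q4.2 b0⟩, g⟩
      ext w
      constructor
      · rintro ⟨⟨A, B⟩, hp, rfl⟩
        exact (key A B).1 hp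
      · intro hw
        have hlen : w.length = n + 1 := by
          have := Multiset.sum_count_eq_card (s := (Finset.univ : Finset (Fin 4)))
            (m := (w : Multiset (Fin 4))) (by simp)
          simp only [Multiset.coe_count, hw.1, Fin.sum_univ_four, Multiset.coe_card] at this
          simp at this
          omega
        obtain ⟨A, B, rfl⟩ := wd_surj w hlen
        exact ⟨(A, B), (key A B).2 hw, rfl⟩
    rw [← him, Set.ncard_image_of_injective _ wd_inj] at hw
    rw [hw]
    have e0 : (((n + 1 : ℕ) : ℤ) - ((j' : ℤ) + (j'' : ℤ) - (j : ℤ))) =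
        ((n + 1 + j - (j' + j'') : ℕ) : ℤ) := by omega
    have e1 : (j' : ℤ) - j = ((j' - j : ℕ) : ℤ) := by omega
    have e2 : (j'' : ℤ) - j = ((j'' - j : ℕ) : ℤ) := by omega
    rw [e0, e1, e2, comp_eq_cc _ _ (by omega), comp_eq_cc _ _ (by omega),
      comp_eq_cc _ _ (by omega), comp_eq_cc _ _ (by omega)]
    simp [Fin.prod_univ_four, mul_assoc]
  · have hempty : S = ∅ := by
      rw [Set.eq_empty_iff_forall_notMem]
      rintro ⟨A, B⟩ hp
      obtain ⟨⟨a1, a2, a3, a4, a5, a6, a7, a8, a9, -⟩, -⟩ := (hS _).1 hp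
      obtain ⟨k1, k2, k3, k4, k5⟩ := hcards A B
      simp only at *
      apply hcond
      omega
    rw [hempty, Set.ncard_empty]; symm
    have hz : ∀ (m : ℕ) (z : ℤ), z ≤ 0 → comp m z = 0 := by
      intro m z hz
      rw [comp, if_neg]; omega
    by_cases c1 : 0 < j
    · by_cases c2 : j < j'
      · by_cases c3 : j < j''
        · rw [hz m0 _ (by omega)]; simp
        · rw [hz m2 _ (by omega)]; simp
      · rw [hz m1 _ (by omega)]; simp
    · rw [hz m3 _ (by omega)]; simp

lemma trace_iff {t : ℕ} (a b : Fin t) (A X : Finset (Fin t)) (hX : X ⊆ {a, b}) :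
    ({a, b} : Finset (Fin t)) ∩ A = X ↔ (a ∈ A ↔ a ∈ X) ∧ (b ∈ A ↔ b ∈ X) := by
  constructor
  · rintro rfl; simp
  · rintro ⟨h1, h2⟩
    ext i
    simp only [Finset.mem_inter, Finset.mem_insert, Finset.mem_singleton]
    constructor
    · rintro ⟨rfl | rfl, h⟩
      · exact h1.1 h
      · exact h2.1 h
    · intro h
      have := hX h
      simp only [Finset.mem_insert, Finset.mem_singleton] at this
      refine ⟨this, ?_⟩
      rcases this with rfl | rfl
      · exact h1.2 h
      · exact h2.2 h

/-- cases (i)–(v): counts of ordered two-member intersecting Sperner families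
not covering `[t]`, refined by `q(A-B)`, `q(B-A)`, `q(A∩B)`, `q(A∪B)` and traces on `{1,t}`. -/
theorem stmt16 (t j' j'' j ℓ' ℓ'' ℓcap ℓ : ℕ) (ht : 3 ≤ t)
    (hodd' : Odd ℓ') (hle' : ℓ' ≤ t) (hodd'' : Odd ℓ'') (hle'' : ℓ'' ≤ t)
    (hoddc : Odd ℓcap) (hlec : ℓcap ≤ t) (hoddl : Odd ℓ) (hlel : ℓ ≤ t)
    (S1 S2 S3 S4 S5 : Set (Finset (Fin t) × Finset (Fin t)))
    (hS1 : S1 = { p : Finset (Fin t) × Finset (Fin t) | p.1.card = j' ∧ j' < t ∧ p.2.card = j'' ∧ j'' < t ∧ (p.1 ∩ p.2).card = j ∧ 0 < j ∧ j' < (p.1 ∪ p.2).card ∧ j'' < (p.1 ∪ p.2).card ∧ (p.1 ∪ p.2).card < t ∧ qIs t (p.1 \ p.2) ℓ' ∧ qIs t (p.2 \ p.1) ℓ'' ∧ qIs t (p.1 ∩ p.2) ℓcap ∧ qIs t (p.1 ∪ p.2) ℓ ∧ ({⟨0, by omega⟩, ⟨t - 1, by omega⟩} : Finset (Fin t)) ∩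 p.1 = ({⟨0, by omega⟩} : Finset (Fin t)) ∧ ({⟨0, by omega⟩, ⟨t - 1, by omega⟩} : Finset (Fin t)) ∩ p.2 = ({⟨0, by omega⟩} : Finset (Fin t)) })
    (hS2 : S2 = { p : Finset (Fin t) × Finset (Fin t) | p.1.card = j' ∧ j' < t ∧ p.2.card = j'' ∧ j'' < t ∧ (p.1 ∩ p.2).card = j ∧ 0 < j ∧ j' < (p.1 ∪ p.2).card ∧ j'' < (p.1 ∪ p.2).card ∧ (p.1 ∪ p.2).card < t ∧ qIs t (p.1 \ p.2) ℓ' ∧ qIs t (p.2 \ p.1) ℓ'' ∧ qIs t (p.1 ∩ p.2) ℓcap ∧ qIs t (p.1 ∪ p.2) ℓ ∧ ({⟨0, by omega⟩, ⟨t - 1, by omega⟩} : Finset (Fin t)) ∩ p.1 = ({⟨0, by omega⟩} : Finset (Fin t)) ∧ ({⟨0, by omega⟩, ⟨t - 1, by omega⟩} : Finset (Fin t)) ∩ p.2 = ({⟨0, by omega⟩, ⟨t - 1, by omega⟩} : Finset (Fin t)) })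
    (hS3 : S3 = { p : Finset (Fin t) × Finset (Fin t) | p.1.card = j' ∧ j' < t ∧ p.2.card = j'' ∧ j'' < t ∧ (p.1 ∩ p.2).card = j ∧ 0 < j ∧ j' < (p.1 ∪ p.2).card ∧ j'' < (p.1 ∪ p.2).card ∧ (p.1 ∪ p.2).card < t ∧ qIs t (p.1 \ p.2) ℓ' ∧ qIs t (p.2 \ p.1) ℓ'' ∧ qIs t (p.1 ∩ p.2) ℓcap ∧ qIs t (p.1 ∪ p.2) ℓ ∧ ({⟨0, by omega⟩, ⟨t - 1, by omega⟩} : Finset (Fin t)) ∩ p.1 = ({⟨0, by omega⟩} : Finset (Fin t)) ∧ ({⟨0, by omega⟩, ⟨t - 1, by omega⟩} : Finset (Fin t)) ∩ p.2 = ∅ })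
    (hS4 : S4 = { p : Finset (Fin t) × Finset (Fin t) | p.1.card = j' ∧ j' < t ∧ p.2.card = j'' ∧ j'' < t ∧ (p.1 ∩ p.2).card = j ∧ 0 < j ∧ j' < (p.1 ∪ p.2).card ∧ j'' < (p.1 ∪ p.2).card ∧ (p.1 ∪ p.2).card < t ∧ qIs t (p.1 \ p.2) ℓ' ∧ qIs t (p.2 \ p.1) ℓ'' ∧ qIs t (p.1 ∩ p.2) ℓcap ∧ qIs t (p.1 ∪ p.2) ℓ ∧ ({⟨0, by omega⟩, ⟨t - 1, by omega⟩} : Finset (Fin t)) ∩ p.1 = ({⟨0, by omega⟩} : Finset (Fin t)) ∧ ({⟨0, by omega⟩, ⟨t - 1, by omega⟩} : Finset (Fin t)) ∩ p.2 = ({⟨t - 1, by omega⟩} : Finset (Fin t)) })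
    (hS5 : S5 = { p : Finset (Fin t) × Finset (Fin t) | p.1.card = j' ∧ j' < t ∧ p.2.card = j'' ∧ j'' < t ∧ (p.1 ∩ p.2).card = j ∧ 0 < j ∧ j' < (p.1 ∪ p.2).card ∧ j'' < (p.1 ∪ p.2).card ∧ (p.1 ∪ p.2).card < t ∧ qIs t (p.1 \ p.2) ℓ' ∧ qIs t (p.2 \ p.1) ℓ'' ∧ qIs t (p.1 ∩ p.2) ℓcap ∧ qIs t (p.1 ∪ p.2) ℓ ∧ ({⟨0, by omega⟩, ⟨t - 1, by omega⟩} : Finset (Fin t)) ∩ p.1 = ({⟨0, by omega⟩, ⟨t - 1, by omega⟩} : Finset (Fin t)) ∧ ({⟨0, by omega⟩, ⟨t - 1, by omega⟩} : Finset (Fin t)) ∩ p.2 = ({⟨0, by omega⟩, ⟨t - 1, by omega⟩} : Finset (Fin t)) })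
    : S1.ncard = Fr 3 0 ((ℓ + 1) / 2) ((ℓ' - 1) / 2) ((ℓ'' - 1) / 2) ((ℓcap + 1) / 2) * comp ((ℓ + 1) / 2) ((t : ℤ) - ((j' : ℤ) + (j'' : ℤ) - (j : ℤ))) * comp ((ℓ' - 1) / 2) ((j' : ℤ) - (j : ℤ)) * comp ((ℓ'' - 1) / 2) ((j'' : ℤ) - (j : ℤ)) * comp ((ℓcap + 1) / 2) ((j : ℤ)) ∧
      S2.ncard = Fr 3 2 ((ℓ - 1) / 2) ((ℓ' - 1) / 2) ((ℓ'' + 1) / 2) ((ℓcap + 1) / 2) * comp ((ℓ - 1) / 2) ((t : ℤ) - ((j' : ℤ) + (j'' : ℤ) - (j : ℤ))) * comp ((ℓ' - 1) / 2) ((j' : ℤ) - (j : ℤ)) * comp ((ℓ'' + 1) / 2) ((j'' : ℤ) - (j : ℤ)) * comp ((ℓcap + 1) / 2) ((j : ℤ)) ∧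
      S3.ncard = Fr 1 0 ((ℓ + 1) / 2) ((ℓ' + 1) / 2) ((ℓ'' - 1) / 2) ((ℓcap - 1) / 2) * comp ((ℓ + 1) / 2) ((t : ℤ) - ((j' : ℤ) + (j'' : ℤ) - (j : ℤ))) * comp ((ℓ' + 1) / 2) ((j' : ℤ) - (j : ℤ)) * comp ((ℓ'' - 1) / 2) ((j'' : ℤ) - (j : ℤ)) * comp ((ℓcap - 1) / 2) ((j : ℤ)) ∧
      S4.ncard = Fr 1 2 ((ℓ - 1) / 2) ((ℓ' + 1) / 2) ((ℓ'' + 1) / 2) ((ℓcap - 1) / 2) * comp ((ℓ - 1) / 2) ((t : ℤ) - ((j' : ℤ) + (j'' : ℤ) - (j : ℤ))) * comp ((ℓ' + 1) / 2) ((j' : ℤ) - (j : ℤ)) * comp ((ℓ'' + 1) / 2) ((j'' : ℤ) - (j : ℤ)) * comp ((ℓcap - 1) / 2) ((j : ℤ)) ∧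
      S5.ncard = Fr 3 3 ((ℓ - 1) / 2) ((ℓ' - 1) / 2) ((ℓ'' - 1) / 2) ((ℓcap + 1) / 2) * comp ((ℓ - 1) / 2) ((t : ℤ) - ((j' : ℤ) + (j'' : ℤ) - (j : ℤ))) * comp ((ℓ' - 1) / 2) ((j' : ℤ) - (j : ℤ)) * comp ((ℓ'' - 1) / 2) ((j'' : ℤ) - (j : ℤ)) * comp ((ℓcap + 1) / 2) ((j : ℤ)) := by
  obtain ⟨n, rfl⟩ : ∃ n, t = n + 1 := ⟨t - 1, by omega⟩
  have hne : (0 : Fin (n + 1)) ≠ Fin.last n := by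
    intro h; have := congrArg Fin.val h; simp at this; omega
  have e0 : ∀ h : 0 < n + 1, (⟨0, h⟩ : Fin (n + 1)) = 0 := fun _ => rfl
  have e1 : ∀ h : n + 1 - 1 < n + 1, (⟨n + 1 - 1, h⟩ : Fin (n + 1)) = Fin.last n := fun _ => rfl
  have hne' := hne.symm
  obtain ⟨a, rfl⟩ := hodd'
  obtain ⟨b, rfl⟩ := hodd''
  obtain ⟨c, rfl⟩ := hoddc
  obtain ⟨d, rfl⟩ := hoddl
  refine ⟨?_, ?_, ?_, ?_, ?_⟩
  · refine gen_count n j' j'' j (2 * a + 1) (2 * b + 1) (2 * c + 1) (2 * d + 1) _ _ _ _ _ _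
      (by simp; try omega) (by simp; try omega) (by simp; try omega) (by simp; try omega) S1 ?_
    intro p
    rw [hS1]
    simp only [e0, e1, Set.mem_setOf_eq]
    rw [trace_iff _ _ p.1 _ (by simp), trace_iff _ _ p.2 _ (by simp)]
    simp only [ltr0, ltr1, ltr2, ltr3, Finset.mem_insert, Finset.mem_singleton, hne, hne',
      Finset.notMem_empty, true_or, or_true, iff_true, iff_false]
    tauto
  · refine gen_count n j' j'' j (2 * a + 1) (2 * b + 1) (2 * c + 1) (2 * d + 1) _ _ _ _ _ _
      (by simp; try omega) (by simp; try omega) (by simp; try omega) (by simp; try omega) S2 ?_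
    intro p
    rw [hS2]
    simp only [e0, e1, Set.mem_setOf_eq]
    rw [trace_iff _ _ p.1 _ (by simp), trace_iff _ _ p.2 _ (by simp)]
    simp only [ltr0, ltr1, ltr2, ltr3, Finset.mem_insert, Finset.mem_singleton, hne, hne',
      Finset.notMem_empty, true_or, or_true, iff_true, iff_false]
    tauto
  · refine gen_count n j' j'' j (2 * a + 1) (2 * b + 1) (2 * c + 1) (2 * d + 1) _ _ _ _ _ _
      (by simp; try omega) (by simp; try omega) (by simp; try omega) (by simp; try omega) S3 ?_
    intro p
    rw [hS3]
    simp only [e0, e1, Set.mem_setOf_eq]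
    rw [trace_iff _ _ p.1 _ (by simp), trace_iff _ _ p.2 _ (by simp)]
    simp only [ltr0, ltr1, ltr2, ltr3, Finset.mem_insert, Finset.mem_singleton, hne, hne',
      Finset.notMem_empty, true_or, or_true, iff_true, iff_false]
    tauto
  · refine gen_count n j' j'' j (2 * a + 1) (2 * b + 1) (2 * c + 1) (2 * d + 1) _ _ _ _ _ _
      (by simp; try omega) (by simp; try omega) (by simp; try omega) (by simp; try omega) S4 ?_
    intro p
    rw [hS4]
    simp only [e0, e1, Set.mem_setOf_eq]
    rw [trace_iff _ _ p.1 _ (by simp), trace_iff _ _ p.2 _ (by simp)]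
    simp only [ltr0, ltr1, ltr2, ltr3, Finset.mem_insert, Finset.mem_singleton, hne, hne',
      Finset.notMem_empty, true_or, or_true, iff_true, iff_false]
    tauto
  · refine gen_count n j' j'' j (2 * a + 1) (2 * b + 1) (2 * c + 1) (2 * d + 1) _ _ _ _ _ _
      (by simp; try omega) (by simp; try omega) (by simp; try omega) (by simp; try omega) S5 ?_
    intro p
    rw [hS5]
    simp only [e0, e1, Set.mem_setOf_eq]
    rw [trace_iff _ _ p.1 _ (by simp), trace_iff _ _ p.2 _ (by simp)]
    simp only [ltr0, ltr1, ltr2, ltr3, Finset.mem_insert, Finset.mem_singleton, hne, hne',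
      Finset.notMem_empty, true_or, or_true, iff_true, iff_false]
    tauto
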